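/- Let α be a loop in 𝔻 based at d₀. Then α is reduced if and only if f ∘ α is reduced, where f is the shift map. -/

import Mathlib

open scoped unitInterval

noncomputable section

/-- The base segment `B = [0,1] × {0}` of the dyadic arc space. -/
def B2 : Set (ℝ × ℝ) := {p | p.1 ∈ Set.Icc (0:ℝ) 1 ∧ p.2 = 0}

/-- The upper semicircle `𝔻_{n,j}` with center `((2j-1)/2ⁿ, 0)` and radius `1/2ⁿ`. -/
def Dnj (n j : ℕ) : Set (ℝ × ℝ) :=
  {p | (p.1 - (2*(j:ℝ)-1)/2^n)^2 + p.2^2 = (1/2^n)^2 ∧ 0 ≤ p.2}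

/-- The dyadic arc space `𝔻 ⊆ ℝ²`. -/
def Dspace : Set (ℝ × ℝ) :=
  B2 ∪ ⋃ (n : ℕ) (_ : 1 ≤ n) (j : ℕ) (_ : 1 ≤ j) (_ : j ≤ 2^(n-1)), Dnj n j

/-- The dyadic arc space as a topological space. -/
abbrev DD : Type := ↥Dspace

/-- The basepoint `d₀ = (0,0)` of `𝔻`. -/
def d0 : DD := ⟨((0:ℝ), (0:ℝ)), Or.inl ⟨⟨le_refl _, zero_le_one⟩, rfl⟩⟩

theorem d0_mem_B : ((d0 : DD) : ℝ × ℝ) ∈ B2 := ⟨⟨le_refl _, zero_le_one⟩, rfl⟩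

/-- Characterization of the shift map `f : 𝔻 → 𝔻`: it fixes `B` pointwise, and it maps each
point of `𝔻_{n,j}` to the point of `𝔻_{n+1,2j-1} ∪ 𝔻_{n+1,2j}` with the same first
coordinate (and nonnegative second coordinate). -/
def IsShiftMap (f : DD → DD) : Prop :=
  (∀ p : DD, (p : ℝ × ℝ) ∈ B2 → f p = p) ∧
  ∀ n j : ℕ, 1 ≤ n → 1 ≤ j → j ≤ 2^(n-1) → ∀ p : DD, (p : ℝ × ℝ) ∈ Dnj n j →
    ((f p : ℝ × ℝ).1 = (p : ℝ × ℝ).1 ∧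
      ((f p : ℝ × ℝ) ∈ Dnj (n+1) (2*j-1) ∪ Dnj (n+1) (2*j)))

/-- The affine subpath of `α : C([a,b], X)` from `s` to `t`, as a `Path`. -/
def subPath {X : Type*} [TopologicalSpace X] {a b : ℝ} (α : C(Set.Icc a b, X))
    (s t : Set.Icc a b) (hst : (s : ℝ) ≤ (t : ℝ)) : Path (α s) (α t) where
  toFun u := α ⟨(1 - (u : ℝ)) * (s : ℝ) + (u : ℝ) * (t : ℝ),
    ⟨le_trans s.2.1 (by nlinarith [u.2.1, u.2.2]),
     le_trans (by nlinarith [u.2.1, u.2.2]) t.2.2⟩⟩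
  continuous_toFun := by
    apply α.continuous.comp; apply Continuous.subtype_mk; fun_prop
  source' := by apply congrArg α; apply Subtype.ext; simp
  target' := by apply congrArg α; apply Subtype.ext; simp

/-- A path `α : [a,b] → X` is *reduced* if it is constant or if for all `s < t` with
`α(s) = α(t)`, the loop `α|_{[s,t]}` is not null-homotopic. -/
def IsReducedOn {X : Type*} [TopologicalSpace X] {a b : ℝ} (α : C(Set.Icc a b, X)) : Prop :=
  (∃ c, ∀ u, α u = c) ∨
  ∀ (s t : Set.Icc a b) (hst : (s : ℝ) < (t : ℝ)) (he : α s = α t),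
    ¬ ((subPath α s t hst.le).cast rfl he).Homotopic (Path.refl (α s))

/-- Equivalence (`≡`) of paths on intervals: equality up to an increasing homeomorphism of
the parameter intervals. -/
def PathEquivOn {X : Type*} [TopologicalSpace X] {a b c d : ℝ}
    (α : C(Set.Icc a b, X)) (β : C(Set.Icc c d, X)) : Prop :=
  ∃ γ : Set.Icc a b ≃ₜ Set.Icc c d, StrictMono (fun u => γ u) ∧ ∀ u, α u = β (γ u)

/-- Restriction of `α : C([a,b], X)` to the subinterval `[c,d]` (via clamping; for
`[c,d] ⊆ [a,b]` this is the restriction `α|_{[c,d]}`). -/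
def resIcc {X : Type*} [TopologicalSpace X] {a b : ℝ} (α : C(Set.Icc a b, X)) (hab : a ≤ b)
    (c d : ℝ) : C(Set.Icc c d, X) :=
  α.comp ⟨fun u => Set.projIcc a b hab (u : ℝ), continuous_projIcc.comp continuous_subtype_val⟩

/-- The reverse of a path on `[c,d]`. -/
def reverseIcc {X : Type*} [TopologicalSpace X] {c d : ℝ} (β : C(Set.Icc c d, X)) :
    C(Set.Icc c d, X) :=
  ⟨fun u => β ⟨c + d - (u : ℝ), ⟨by linarith [u.2.1, u.2.2], by linarith [u.2.1, u.2.2]⟩⟩,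
    β.continuous.comp (by apply Continuous.subtype_mk; fun_prop)⟩

/-- The path `α : [a,b] → X` reparametrized affinely as a `Path` on `[0,1]`. -/
def toPathIcc {X : Type*} [TopologicalSpace X] {a b : ℝ} (hab : a ≤ b)
    (α : C(Set.Icc a b, X)) :
    Path (α ⟨a, Set.left_mem_Icc.mpr hab⟩) (α ⟨b, Set.right_mem_Icc.mpr hab⟩) :=
  subPath α _ _ hab


open Set Filter Topology

/-- Abstract injectivity: a map homotopic to the identity reflects null-homotopic loops. -/
theorem null_of_homotopy_id {X : Type*} [TopologicalSpace X] {g : C(X, X)}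
    (H : ContinuousMap.Homotopy (ContinuousMap.id X) g) {p : X} (β : Path p p)
    (hβ : (β.map g.continuous).Homotopic (Path.refl (g p))) : β.Homotopic (Path.refl p) := by
  have h1 := Path.Homotopic.map_trans_evalAt H β
  have h2 := Path.Homotopic.Quotient.eq.2 h1
  have h3 := Path.Homotopic.Quotient.eq.2 hβ
  simp only [Path.Homotopic.Quotient.mk_trans] at h2
  rw [h3] at h2
  have h4 : Path.Homotopic.Quotient.mk (β.map (ContinuousMap.id X).continuous) = 
     Path.Homotopic.Quotient.mk (Path.refl p) := by
    have := congrArg (fun z => Path.Homotopic.Quotient.trans z (Path.Homotopic.Quotient.symm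
      (Path.Homotopic.Quotient.mk (H.evalAt p)))) h2
    simpa using this
  exact Path.Homotopic.Quotient.eq.1 h4

/-- A loop whose image under `φ` is lifted by `G` cannot be null-homotopic unless `G` closes up. -/
theorem closed_lift {X Y : Type*} [TopologicalSpace X] [TopologicalSpace Y] (f : C(X, Y))
    (φ : C(Y, Circle)) (G : C(X, ℝ)) (hG : ∀ x, φ (f x) = Circle.exp (G x))
    {p q : X} (β : Path p q) (h : f p = f q)
    (hn : ((β.map f.continuous).cast rfl h).Homotopic (Path.refl (f p))) : G p = G q := by
  have h1 : ((Path.toContinuousMap (β.map G.continuous))).HomotopicRel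
      (ContinuousMap.const I (G p)) {0, 1} := by
    rw [Circle.isCoveringMap_exp.homotopicRel_iff_comp ⟨0, by simp, by simp⟩]
    obtain ⟨K⟩ := hn.map φ
    refine ⟨ContinuousMap.HomotopyRel.cast K ?_ ?_⟩
    · ext u; simp [hG]
    · ext u; simp [hG]
  obtain ⟨F⟩ := h1
  have := (F.eq_fst 0 (x := 1) (by simp)).symm.trans (F.eq_snd 0 (x := 1) (by simp)) 
  simpa using this.symm

/-- height of the arc of scale `ε` above `x`. -/
def ht (x ε : ℝ) : ℝ := ε * √(Int.fract (x / ε) * (1 - Int.fract (x / ε)))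

/-- Scaled periodic functions are jointly continuous. -/
theorem cont_scaled (Φ : I → ℝ → ℝ) (hΦ : Continuous (Function.uncurry Φ))
    (h0 : ∀ t, Φ t 0 = 0) (h1 : ∀ t, Φ t 1 = 0) :
    Continuous (fun z : (ℝ × ℝ) × I => z.1.2 * Φ z.2 (Int.fract (z.1.1 / z.1.2))) := by
  obtain ⟨C, hC⟩ : ∃ C, ∀ z ∈ (univ : Set I) ×ˢ Icc (0:ℝ) 1, ‖Function.uncurry Φ z‖ ≤ C :=
    (isCompact_univ.prod isCompact_Icc).exists_bound_of_continuousOn hΦ.continuousOn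
  have hper : Continuous (fun w : I × ℝ => Φ w.1 (Int.fract w.2)) := by
    refine ContinuousOn.comp_fract (f := fun w : I × ℝ => Φ w.1) ?_ continuous_snd ?_
    · apply Continuous.continuousOn
      exact hΦ.comp (by fun_prop : Continuous fun z : (I × ℝ) × ℝ => (z.1.1, z.2))
    · intro w; rw [h0, h1]
  rw [continuous_iff_continuousAt]
  rintro ⟨⟨x, ε⟩, t⟩
  by_cases hε : ε = 0
  · subst hε
    have hz : Tendsto (fun z : (ℝ × ℝ) × I => C * |z.1.2|) (𝓝 ((x, 0), t)) (𝓝 0) := by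
      have : Continuous (fun z : (ℝ × ℝ) × I => C * |z.1.2|) := by fun_prop
      simpa using this.tendsto ((x, 0), t)
    unfold ContinuousAt
    simp only [zero_mul]
    refine squeeze_zero_norm (fun z => ?_) hz
    rw [norm_mul, mul_comm, Real.norm_eq_abs z.1.2]
    apply mul_le_mul_of_nonneg_right _ (abs_nonneg _)
    exact hC (z.2, Int.fract (z.1.1 / z.1.2))
      ⟨mem_univ _, Int.fract_nonneg _, (Int.fract_lt_one _).le⟩
  · have hd : ContinuousAt (fun z : (ℝ × ℝ) × I => z.1.1 / z.1.2) ((x, ε), t) := by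
      apply ContinuousAt.div
      · fun_prop
      · fun_prop
      · exact hε
    have h2 : ContinuousAt (fun z : (ℝ × ℝ) × I => (z.2, z.1.1 / z.1.2)) ((x, ε), t) :=
      continuousAt_snd.prodMk hd
    have h3 := ContinuousAt.comp (f := fun z : (ℝ × ℝ) × I => (z.2, z.1.1 / z.1.2))
      (x := ((x, ε), t)) hper.continuousAt h2
    have h4 : ContinuousAt (fun z : (ℝ × ℝ) × I => z.1.2) ((x, ε), t) := by fun_prop
    exact h4.mul h3

theorem ht_nonneg {x ε : ℝ} (hε : 0 ≤ ε) : 0 ≤ ht x ε := mul_nonneg hε (Real.sqrt_nonneg _)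

theorem ht_zero (x : ℝ) : ht x 0 = 0 := by simp [ht]

theorem ht_sq (x ε : ℝ) :
    ht x ε ^ 2 = ε ^ 2 * (Int.fract (x / ε) * (1 - Int.fract (x / ε))) := by
  rw [ht, mul_pow, Real.sq_sqrt]
  exact mul_nonneg (Int.fract_nonneg _) (by linarith [Int.fract_lt_one (x / ε)])

/-- recognising the height -/
theorem eq_ht {x y δ : ℝ} (m : ℤ) (hδ : 0 < δ) (hy : 0 ≤ y)
    (h : y ^ 2 = (x - m * δ) * ((m + 1) * δ - x)) : y = ht x δ := by
  obtain ⟨z, rfl⟩ : ∃ z, x = z * δ := ⟨x / δ, by field_simp⟩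
  have hz : z * δ / δ = z := by field_simp
  have h' : y ^ 2 = δ ^ 2 * ((z - m) * (m + 1 - z)) := by rw [h]; ring
  have h3 : 0 ≤ (z - m) * (m + 1 - z) := by
    by_contra hc
    push Not at hc
    nlinarith [sq_nonneg y, mul_pos hδ hδ]
  have hm : (m : ℝ) ≤ z := by nlinarith
  have hm' : z ≤ m + 1 := by nlinarith
  have key : y ^ 2 = ht (z * δ) δ ^ 2 := by
    rw [ht_sq, hz, h']
    rcases hm'.lt_or_eq with h4 | h4
    · have : ⌊z⌋ = m := Int.floor_eq_iff.2 ⟨hm, h4⟩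
      rw [Int.fract, this]; ring
    · have : Int.fract z = 0 := by
        rw [h4]; simp
      rw [this, h4]; ring
  exact (sq_eq_sq₀ hy (ht_nonneg hδ.le)).1 key

theorem ht_eq_zero {x δ : ℝ} (hδ : 0 < δ) (h : ht x δ = 0) : Int.fract (x / δ) = 0 := by
  have h1 := ht_sq x δ
  rw [h] at h1
  have h2 : Int.fract (x / δ) * (1 - Int.fract (x / δ)) = 0 := by
    have : δ ^ 2 ≠ 0 := by positivity
    simpa [this] using h1.symm
  rcases mul_eq_zero.1 h2 with h3 | h3
  · exact h3
  · linarith [Int.fract_lt_one (x / δ)]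

theorem ht_of_fract {x δ : ℝ} (h : Int.fract (x / δ) = 0) : ht x δ = 0 := by
  simp [ht, h]

theorem fract_two_mul (z : ℝ) : (Int.fract z < 1 / 2 ∧ Int.fract (2 * z) = 2 * Int.fract z) ∨
    (1 / 2 ≤ Int.fract z ∧ Int.fract (2 * z) = 2 * Int.fract z - 1) := by
  have h0 := Int.fract_nonneg z
  have h1 := Int.fract_lt_one z
  have h2 := Int.self_sub_floor z
  rcases lt_or_ge (Int.fract z) (1 / 2) with h | h
  · left; refine ⟨h, ?_⟩
    rw [Int.fract_eq_iff]
    refine ⟨by linarith, by linarith, 2 * ⌊z⌋, ?_⟩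
    push_cast; linarith
  · right; refine ⟨h, ?_⟩
    rw [Int.fract_eq_iff]
    refine ⟨by linarith, by linarith, 2 * ⌊z⌋ + 1, ?_⟩
    push_cast; linarith

theorem ht_half {x δ : ℝ} (hδ : 0 < δ) :
    (ht x δ = 0 ∧ ht x (δ / 2) = 0) ∨ ht x (δ / 2) < ht x δ := by
  have h0 := Int.fract_nonneg (x / δ)
  have h1 := Int.fract_lt_one (x / δ)
  have e : x / (δ / 2) = 2 * (x / δ) := by field_simp
  by_cases h : Int.fract (x / δ) = 0
  · left
    refine ⟨ht_of_fract h, ht_of_fract ?_⟩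
    rw [e]
    rcases fract_two_mul (x / δ) with ⟨_, h3⟩ | ⟨h3, _⟩
    · rw [h3, h]; simp
    · rw [h] at h3; norm_num at h3
  · right
    have hp : 0 < Int.fract (x / δ) := lt_of_le_of_ne h0 (Ne.symm h)
    refine lt_of_pow_lt_pow_left₀ 2 (ht_nonneg hδ.le) ?_
    rw [ht_sq, ht_sq, e, div_pow, div_mul_eq_mul_div, mul_div_assoc]
    refine mul_lt_mul_of_pos_left ?_ (by positivity)
    rcases fract_two_mul (x / δ) with ⟨h3, h4⟩ | ⟨h3, h4⟩ <;> rw [h4] <;> nlinarith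

/-- the scales -/
def sc (n : ℕ) : ℝ := (1 / 2) ^ n

theorem sc_pos (n : ℕ) : 0 < sc n := by unfold sc; positivity

theorem sc_succ (n : ℕ) : sc (n + 1) = sc n / 2 := by unfold sc; rw [pow_succ]; ring

theorem ht_lt {x : ℝ} {m n : ℕ} (h : m < n) :
    (ht x (sc m) = 0 ∧ ht x (sc n) = 0) ∨ ht x (sc n) < ht x (sc m) := by
  induction n, h using Nat.le_induction with
  | base => rw [Nat.succ_eq_add_one, sc_succ]; exact ht_half (sc_pos m)
  | succ n hn ih =>
    have := ht_half (x := x) (sc_pos n)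
    rw [← sc_succ] at this
    rcases ih with ⟨h1, h2⟩ | h1 <;> rcases this with ⟨h3, h4⟩ | h3
    · exact Or.inl ⟨h1, h4⟩
    · have := ht_nonneg (x := x) (sc_pos (n+1)).le
      linarith
    · right; linarith
    · right; linarith

/-- the set of scales -/
def KK : Set ℝ := insert 0 (range sc)

theorem KK_compact : IsCompact KK := by
  apply Filter.Tendsto.isCompact_insert_range
  exact tendsto_pow_atTop_nhds_zero_of_lt_one (by norm_num) (by norm_num)

theorem KK_nonneg {ε : ℝ} (h : ε ∈ KK) : 0 ≤ ε := by
  rcases h with rfl | ⟨n, rfl⟩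
  · rfl
  · exact (sc_pos n).le

theorem KK_half {ε : ℝ} (h : ε ∈ KK) : ε / 2 ∈ KK := by
  rcases h with rfl | ⟨n, rfl⟩
  · left; simp
  · right; exact ⟨n + 1, sc_succ n⟩

/-- Injectivity off the base. -/
theorem ht_inj {x ε δ : ℝ} (hε : ε ∈ KK) (hδ : δ ∈ KK) (h : ht x ε = ht x δ) :
    ε = δ ∨ (ht x ε = 0 ∧ ht x δ = 0) := by
  rcases hε with rfl | ⟨m, rfl⟩
  · right; rw [← h]; exact ⟨ht_zero x, ht_zero x⟩
  rcases hδ with rfl | ⟨n, rfl⟩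
  · right; rw [h]; exact ⟨ht_zero x, ht_zero x⟩
  rcases lt_trichotomy m n with hmn | rfl | hmn
  · rcases ht_lt (x := x) hmn with h1 | h1
    · exact Or.inr h1
    · exact absurd h1 (by rw [h]; exact lt_irrefl _)
  · exact Or.inl rfl
  · rcases ht_lt (x := x) hmn with h1 | h1
    · exact Or.inr h1.symm
    · exact absurd h1 (by rw [h]; exact lt_irrefl _)

theorem sc_eq (n : ℕ) : sc n = 1 / 2 ^ n := by unfold sc; rw [div_pow, one_pow]

/-- integer form: the cell of `x` lies in the unit interval -/
theorem floor_cell {x : ℝ} (n : ℕ) (hx : x ∈ Icc (0:ℝ) 1) (hu : Int.fract (x / sc n) ≠ 0) :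
    0 ≤ ⌊x / sc n⌋ ∧ ⌊x / sc n⌋ + 1 ≤ 2 ^ n := by
  have hp := sc_pos n
  have e : x / sc n = x * 2 ^ n := by rw [sc_eq]; field_simp
  refine ⟨Int.floor_nonneg.2 (div_nonneg hx.1 hp.le), ?_⟩
  have h1 : x / sc n ≤ ((2 ^ n : ℤ) : ℝ) := by
    rw [e]; push_cast
    have : (0:ℝ) < 2 ^ n := by positivity
    nlinarith [hx.2]
  have h2 : x / sc n ≠ ((2 ^ n : ℤ) : ℝ) := by
    intro h; apply hu; rw [h]; exact Int.fract_intCast _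
  have h3 : ⌊x / sc n⌋ < 2 ^ n := Int.floor_lt.2 (lt_of_le_of_ne h1 h2)
  omega

theorem mem01 {x w : ℝ} (n : ℕ) (hx : x ∈ Icc (0:ℝ) 1) (hw0 : 0 ≤ w) (hw1 : w ≤ 1)
    (huw : Int.fract (x / sc n) = 0 → w = 0) :
    x + sc n * (w - Int.fract (x / sc n)) ∈ Icc (0:ℝ) 1 := by
  by_cases hu : Int.fract (x / sc n) = 0
  · rw [hu, huw hu]; simpa using hx
  have hp := sc_pos n
  obtain ⟨h1, h2⟩ := floor_cell n hx hu
  have h1' : (0:ℝ) ≤ ⌊x / sc n⌋ := by exact_mod_cast h1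
  have h2' : (⌊x / sc n⌋ : ℝ) + 1 ≤ 2 ^ n := by exact_mod_cast h2
  have e : x + sc n * (w - Int.fract (x / sc n)) = sc n * (⌊x / sc n⌋ + w) := by
    rw [Int.fract]
    have : sc n * (x / sc n) = x := by field_simp
    linear_combination (-1) * this
  rw [e]
  refine ⟨by positivity, ?_⟩
  calc sc n * (⌊x / sc n⌋ + w) ≤ sc n * 2 ^ n := by gcongr; linarith
    _ = 1 := by rw [sc_eq]; field_simp

theorem mem_D {x ε : ℝ} (hx : x ∈ Icc (0:ℝ) 1) (hε : ε ∈ KK) : (x, ht x ε) ∈ Dspace := by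
  by_cases h0 : ht x ε = 0
  · left; exact ⟨hx, h0⟩
  rcases hε with rfl | ⟨n, rfl⟩
  · exact absurd (ht_zero x) h0
  right
  have hu : Int.fract (x / sc n) ≠ 0 := fun h => h0 (ht_of_fract h)
  obtain ⟨h1, h2⟩ := floor_cell n hx hu
  obtain ⟨k, hk⟩ := Int.eq_ofNat_of_zero_le h1
  have hk' : k + 1 ≤ 2 ^ n := by rw [hk] at h2; exact_mod_cast h2
  simp only [mem_iUnion]
  refine ⟨n + 1, by omega, k + 1, by omega, by simpa using hk', ?_, ht_nonneg (sc_pos n).le⟩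
  have hf : Int.fract (x / sc n) = x / sc n - k := by rw [Int.fract, hk]; simp
  simp only
  rw [ht_sq, hf, sc_eq]
  push_cast
  field_simp
  ring

/-- points of the arcs are of the form `(x, ht x ε)` -/
theorem arc_eq {n j : ℕ} {p : ℝ × ℝ} (hp : p ∈ Dnj (n + 1) j) :
    p.2 = ht p.1 (sc n) := by
  obtain ⟨h1, h2⟩ := hp
  refine eq_ht ((j : ℤ) - 1) (sc_pos n) h2 ?_
  have e : p.2 ^ 2 = (1 / 2 ^ (n+1)) ^ 2 - (p.1 - (2 * (j:ℝ) - 1) / 2 ^ (n+1)) ^ 2 := by linarith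
  rw [e, sc_eq]
  push_cast
  field_simp
  ring

theorem arc_mem01 {n j : ℕ} (hj : 1 ≤ j) (hj' : j ≤ 2 ^ n) {p : ℝ × ℝ} (hp : p ∈ Dnj (n + 1) j) :
    p.1 ∈ Icc (0:ℝ) 1 := by
  obtain ⟨h1, h2⟩ := hp
  have h3 : (p.1 - (2 * (j:ℝ) - 1) / 2 ^ (n+1)) ^ 2 ≤ (1 / 2 ^ (n+1)) ^ 2 := by
    nlinarith [sq_nonneg p.2]
  have h4 := abs_le_of_sq_le_sq' h3 (by positivity)
  have ha : (1:ℝ) ≤ j := by exact_mod_cast hj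
  have hb : (j:ℝ) ≤ 2 ^ n := by exact_mod_cast hj'
  have h5 : (2 * (j:ℝ) - 1) / 2 ^ (n+1) + 1 / 2 ^ (n+1) ≤ 1 := by
    rw [← add_div, div_le_one (by positivity), pow_succ]; linarith
  have h6 : 0 ≤ (2 * (j:ℝ) - 1) / 2 ^ (n+1) - 1 / 2 ^ (n+1) := by
    rw [← sub_div]; apply div_nonneg _ (by positivity); linarith
  exact ⟨by linarith, by linarith⟩

theorem D_param (p : DD) : ∃ x ε, x ∈ Icc (0:ℝ) 1 ∧ ε ∈ KK ∧ (p : ℝ × ℝ) = (x, ht x ε) := by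
  obtain ⟨p, hp⟩ := p
  rcases hp with hp | hp
  · exact ⟨p.1, 0, hp.1, Or.inl rfl, Prod.ext rfl (by rw [ht_zero]; exact hp.2)⟩
  · simp only [mem_iUnion] at hp
    obtain ⟨n, hn, j, hj, hj', hp⟩ := hp
    obtain ⟨n, rfl⟩ : ∃ k, n = k + 1 := ⟨n - 1, by omega⟩
    exact ⟨p.1, sc n, arc_mem01 hj (by simpa using hj') hp, Or.inr ⟨n, rfl⟩,
      Prod.ext rfl (arc_eq hp)⟩

/-- parameter space -/
abbrev PP : Type := ↥(Icc (0:ℝ) 1 ×ˢ KK)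

instance : CompactSpace PP := isCompact_iff_compactSpace.1 (isCompact_Icc.prod KK_compact)

/-- The quotient map -/
def QQ (z : PP) : DD := ⟨(z.1.1, ht z.1.1 z.1.2), mem_D z.2.1 z.2.2⟩

theorem ht_cont : Continuous (fun z : ℝ × ℝ => ht z.1 z.2) := by
  have := cont_scaled (fun _ u => √(u * (1 - u))) (by unfold Function.uncurry; fun_prop) (by simp) (by simp)
  exact this.comp (by fun_prop : Continuous fun z : ℝ × ℝ => (z, (0 : I)))

theorem QQ_cont : Continuous QQ := by
  apply Continuous.subtype_mk
  exact (continuous_fst.comp continuous_subtype_val).prodMk (ht_cont.comp continuous_subtype_val)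

theorem QQ_surj : Function.Surjective QQ := by
  intro p
  obtain ⟨x, ε, hx, hε, h⟩ := D_param p
  exact ⟨⟨(x, ε), hx, hε⟩, Subtype.ext h.symm⟩

theorem QQ_quot : IsQuotientMap QQ := QQ_cont.isClosedMap.isQuotientMap QQ_cont QQ_surj

theorem QQI_quot : IsQuotientMap (Prod.map (id : I → I) QQ) := by
  have hc : Continuous (Prod.map (id : I → I) QQ) := continuous_id.prodMap QQ_cont
  exact hc.isClosedMap.isQuotientMap hc (Function.surjective_id.prodMap QQ_surj)

theorem QQ_eq {z w : PP} (h : QQ z = QQ w) :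
    z = w ∨ (z.1.1 = w.1.1 ∧ ht z.1.1 z.1.2 = 0 ∧ ht w.1.1 w.1.2 = 0) := by
  have h1 : z.1.1 = w.1.1 := congrArg (fun p : DD => (p : ℝ × ℝ).1) h
  have h2 : ht z.1.1 z.1.2 = ht w.1.1 w.1.2 := congrArg (fun p : DD => (p : ℝ × ℝ).2) h
  rw [h1] at h2
  rcases ht_inj z.2.2 w.2.2 h2 with h3 | h3
  · left; exact Subtype.ext (Prod.ext h1 h3)
  · right; rw [h1]; exact ⟨rfl, h3⟩

/-- halving the scale -/
def halfP (z : PP) : PP := ⟨(z.1.1, z.1.2 / 2), z.2.1, KK_half z.2.2⟩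

theorem shift_QQ {f : DD → DD} (hs : IsShiftMap f) (z : PP) : f (QQ z) = QQ (halfP z) := by
  obtain ⟨⟨x, ε⟩, hx, hε⟩ := z
  simp only at hx hε
  by_cases h0 : ht x ε = 0
  · have e : f (QQ ⟨(x, ε), hx, hε⟩) = QQ ⟨(x, ε), hx, hε⟩ := hs.1 _ ⟨hx, h0⟩
    rw [e]
    apply Subtype.ext
    have : ht x (ε / 2) = 0 := by
      rcases hε with rfl | ⟨n, rfl⟩
      · simp [ht_zero]
      · rcases ht_half (x := x) (sc_pos n) with h | h
        · exact h.2
        · have := ht_nonneg (x := x) (half_pos (sc_pos n)).le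
          linarith
    simp [QQ, halfP, h0, this]
  · rcases id hε with rfl | ⟨n, rfl⟩
    · exact absurd (ht_zero x) h0
    rcases (mem_D hx hε) with h | h
    · exact absurd h.2 h0
    · have hu : Int.fract (x / sc n) ≠ 0 := fun h => h0 (ht_of_fract h)
      obtain ⟨h1, h2⟩ := floor_cell n hx hu
      obtain ⟨k, hk⟩ := Int.eq_ofNat_of_zero_le h1
      have hk' : k + 1 ≤ 2 ^ n := by rw [hk] at h2; exact_mod_cast h2
      have hmem : ((QQ ⟨(x, sc n), hx, hε⟩ : DD) : ℝ × ℝ) ∈ Dnj (n + 1) (k + 1) := by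
        refine ⟨?_, ht_nonneg (sc_pos n).le⟩
        have hf : Int.fract (x / sc n) = x / sc n - k := by rw [Int.fract, hk]; simp
        simp only [QQ]
        rw [ht_sq, hf, sc_eq]
        push_cast
        field_simp
        ring
      obtain ⟨ha, hb⟩ := hs.2 (n + 1) (k + 1) (by omega) (by omega) (by simpa using hk') _ hmem
      have hc : (f (QQ ⟨(x, sc n), hx, hε⟩) : ℝ × ℝ).2 =
          ht (f (QQ ⟨(x, sc n), hx, hε⟩) : ℝ × ℝ).1 (sc (n + 1)) := by
        rcases hb with hb | hb
        · exact arc_eq hb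
        · exact arc_eq hb
      apply Subtype.ext
      refine Prod.ext ha ?_
      rw [hc, ha, sc_succ]
      rfl

/-- horizontal position in the model cell -/
def XX (t : I) (u : ℝ) : ℝ :=
  max (min ((1 + 3 * (t : ℝ)) * u) ((3 - (1 + 3 * (t : ℝ)) * u) / 2)) u

/-- vertical position in the model cell -/
def YY (t : I) (u : ℝ) : ℝ := √((1 + 3 * (t : ℝ)) * u * (1 - (1 + 3 * (t : ℝ)) * u))

/-- horizontal displacement -/
def dx (t : I) (x ε : ℝ) : ℝ := ε * (XX t (Int.fract (x / ε)) - Int.fract (x / ε))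

/-- height -/
def dy (t : I) (x ε : ℝ) : ℝ := ε * YY t (Int.fract (x / ε))

theorem XX_one (t : I) : XX t 1 = 1 := by
  have := t.2.1
  unfold XX
  apply max_eq_right
  apply (min_le_right _ _).trans
  linarith

theorem YY_one (t : I) : YY t 1 = 0 := by
  have := t.2.1
  unfold YY
  apply Real.sqrt_eq_zero_of_nonpos
  nlinarith

theorem XX_zero (t : I) : XX t 0 = 0 := by simp [XX]

theorem YY_zero (t : I) : YY t 0 = 0 := by simp [YY]

theorem dx_cont : Continuous (fun z : (ℝ × ℝ) × I => dx z.2 z.1.1 z.1.2) := by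
  apply cont_scaled (fun t u => XX t u - u)
  · unfold Function.uncurry XX; fun_prop
  · simp [XX_zero]
  · simp [XX_one]

theorem dy_cont : Continuous (fun z : (ℝ × ℝ) × I => dy z.2 z.1.1 z.1.2) := by
  apply cont_scaled (fun t u => YY t u)
  · unfold Function.uncurry YY; fun_prop
  · simp [YY_zero]
  · simp [YY_one]

theorem d_of_ht {x ε : ℝ} (hε : 0 ≤ ε) (t : I) (h : ht x ε = 0) :
    dx t x ε = 0 ∧ dy t x ε = 0 := by
  rcases hε.eq_or_lt with rfl | hε
  · simp [dx, dy]
  · have := ht_eq_zero hε h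
    simp [dx, dy, this, XX_zero, YY_zero]

theorem XX_start (u : ℝ) (hu : u ≤ 1) : XX 0 u = u := by
  simp only [XX, Set.Icc.coe_zero, mul_zero, add_zero, one_mul]
  rw [min_eq_left (by linarith), max_self]

theorem d_start (x ε : ℝ) : dx 0 x ε = 0 ∧ dy 0 x ε = ht x ε := by
  constructor
  · rw [dx, XX_start _ (Int.fract_lt_one _).le]; simp
  · simp [dy, YY, ht]

theorem d_mem {x ε : ℝ} (hx : x ∈ Icc (0:ℝ) 1) (hε : ε ∈ KK) (t : I) :
    (x + dx t x ε, dy t x ε) ∈ Dspace := by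
  rcases id hε with rfl | ⟨n, rfl⟩
  · simpa [dx, dy, ht_zero] using mem_D hx hε
  have hu0 := Int.fract_nonneg (x / sc n)
  have hu1 := Int.fract_lt_one (x / sc n)
  have ht0 := t.2.1
  have hp := sc_pos n
  unfold dx dy
  set u := Int.fract (x / sc n) with hu
  have hvu : u ≤ (1 + 3 * (t:ℝ)) * u := by nlinarith
  have hz : u = 0 → XX t u = 0 := by intro h; rw [h, XX_zero]
  rcases le_total ((1 + 3 * (t:ℝ)) * u) 1 with hv | hv
  · have e : XX t u = (1 + 3 * (t:ℝ)) * u := by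
      unfold XX; rw [min_eq_left (by linarith), max_eq_left hvu]
    have hm := mem01 (w := XX t u) n hx (by rw [e]; linarith) (by rw [e]; exact hv) hz
    have h2 : sc n * YY t u = ht (x + sc n * (XX t u - u)) (sc n) := by
      refine eq_ht ⌊x / sc n⌋ hp (mul_nonneg hp.le (Real.sqrt_nonneg _)) ?_
      have ex : x = sc n * (⌊x / sc n⌋ + u) := by
        rw [hu, Int.floor_add_fract]; field_simp
      have e1 : x - sc n * u = sc n * ⌊x / sc n⌋ := by linear_combination ex
      rw [mul_pow, YY, Real.sq_sqrt (by apply mul_nonneg <;> linarith), e]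
      generalize (1 + 3 * (t:ℝ)) * u = v
      generalize (⌊x / sc n⌋ : ℝ) = k at *
      have e2 : x + sc n * (v - u) = sc n * (k + v) := by linear_combination e1
      rw [e2]; ring
    rw [h2]
    exact mem_D hm hε
  · left
    have hle : XX t u ≤ 1 := by
      unfold XX
      exact max_le ((min_le_right _ _).trans (by linarith)) hu1.le
    have hge : 0 ≤ XX t u := hu0.trans (le_max_right _ _)
    refine ⟨mem01 (w := XX t u) n hx hge hle hz, ?_⟩
    have : YY t u = 0 := by
      unfold YY; apply Real.sqrt_eq_zero_of_nonpos; nlinarith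
    simp [this]

/-- The homotopy on the parameter space. -/
def HQ : C(I × PP, DD) where
  toFun z := ⟨(z.2.1.1 + dx z.1 z.2.1.1 z.2.1.2, dy z.1 z.2.1.1 z.2.1.2), d_mem z.2.2.1 z.2.2.2 z.1⟩
  continuous_toFun := by
    apply Continuous.subtype_mk
    have hc : Continuous (fun z : I × PP => ((z.2 : ℝ × ℝ), z.1)) := by fun_prop
    have hx : Continuous (fun z : I × PP => (z.2 : ℝ × ℝ).1) := by fun_prop
    exact (hx.add (dx_cont.comp hc)).prodMk (dy_cont.comp hc)

theorem HQ_factors : Function.FactorsThrough HQ (Prod.map (id : I → I) QQ) := by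
  rintro ⟨t, z⟩ ⟨s, w⟩ h
  simp only [Prod.map_apply, id, Prod.mk.injEq] at h
  obtain ⟨rfl, h⟩ := h
  rcases QQ_eq h with rfl | ⟨h1, h2, h3⟩
  · rfl
  · apply Subtype.ext
    obtain ⟨a, b⟩ := d_of_ht (KK_nonneg z.2.2) t h2
    obtain ⟨c, d⟩ := d_of_ht (KK_nonneg w.2.2) t h3
    rw [h1] at a b
    simp [HQ, a, b, c, d, h1]

/-- The homotopy on `DD`. -/
def HD : C(I × DD, DD) :=
  IsQuotientMap.lift (f := ⟨Prod.map (id : I → I) QQ, continuous_id.prodMap QQ_cont⟩)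
    QQI_quot HQ HQ_factors

theorem HD_QQ (t : I) (z : PP) : HD (t, QQ z) = HQ (t, z) := by
  have := IsQuotientMap.lift_comp
    (f := ⟨Prod.map (id : I → I) QQ, continuous_id.prodMap QQ_cont⟩) QQI_quot HQ HQ_factors
  exact congrArg (fun g : C(I × PP, DD) => g (t, z)) this

/-- cutoff removing the first level -/
def cut (ε : ℝ) : ℝ := min 1 (2 - 2 * ε)

theorem r_mem {x ε : ℝ} (hx : x ∈ Icc (0:ℝ) 1) (hε : ε ∈ KK) :
    (x + cut ε * dx 1 x (2 * ε), cut ε * dy 1 x (2 * ε)) ∈ Dspace := by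
  rcases id hε with rfl | ⟨n, rfl⟩
  · simpa [dx, dy, ht_zero] using mem_D hx hε
  rcases n with _ | n
  · left; simpa [cut, sc, B2] using And.intro hx (rfl : (0:ℝ) = 0)
  · have e : 2 * sc (n + 1) = sc n := by rw [sc_succ]; ring
    have h1 : sc n ≤ 1 := pow_le_one₀ (by norm_num) (by norm_num)
    have : cut (sc (n+1)) = 1 := by
      unfold cut; rw [e]; apply min_eq_left; linarith
    rw [this, e, one_mul, one_mul]
    exact d_mem hx (Or.inr ⟨n, rfl⟩) 1

/-- The homotopy left inverse on the parameter space. -/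
def RQ : C(PP, DD) where
  toFun z := ⟨(z.1.1 + cut z.1.2 * dx 1 z.1.1 (2 * z.1.2), cut z.1.2 * dy 1 z.1.1 (2 * z.1.2)),
    r_mem z.2.1 z.2.2⟩
  continuous_toFun := by
    apply Continuous.subtype_mk
    have hc : Continuous (fun z : PP => (((z : ℝ × ℝ).1, 2 * (z : ℝ × ℝ).2), (1 : I))) := by fun_prop
    have hx : Continuous (fun z : PP => (z : ℝ × ℝ).1) := by fun_prop
    have hk : Continuous (fun z : PP => cut (z : ℝ × ℝ).2) := by unfold cut; fun_prop
    exact (hx.add (hk.mul (dx_cont.comp hc))).prodMk (hk.mul (dy_cont.comp hc))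

theorem d_one_of_half {x ε : ℝ} (hε : 0 ≤ ε) (h : ht x ε = 0) :
    dx 1 x (2 * ε) = 0 ∧ dy 1 x (2 * ε) = 0 := by
  rcases hε.eq_or_lt with rfl | hε
  · simp [dx, dy]
  · have h0 := ht_eq_zero hε h
    have e : x / ε = 2 * (x / (2 * ε)) := by field_simp
    rw [e] at h0
    unfold dx dy
    have h5 := Int.fract_nonneg (x / (2 * ε))
    rcases fract_two_mul (x / (2 * ε)) with ⟨h1, h2⟩ | ⟨h1, h2⟩
    · have : Int.fract (x / (2 * ε)) = 0 := by linarith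
      rw [this, XX_zero, YY_zero]; simp
    · have : Int.fract (x / (2 * ε)) = 1 / 2 := by linarith
      rw [this]
      have a : XX 1 (1 / 2) = 1 / 2 := by norm_num [XX]
      have b : YY 1 (1 / 2) = 0 := by
        unfold YY; apply Real.sqrt_eq_zero_of_nonpos; norm_num
      rw [a, b]; simp

theorem RQ_factors : Function.FactorsThrough RQ QQ := by
  rintro z w h
  rcases QQ_eq h with rfl | ⟨h1, h2, h3⟩
  · rfl
  · apply Subtype.ext
    obtain ⟨a, b⟩ := d_one_of_half (KK_nonneg z.2.2) h2
    obtain ⟨c, d⟩ := d_one_of_half (KK_nonneg w.2.2) h3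
    rw [h1] at a b
    simp [RQ, a, b, c, d, h1]

/-- The homotopy left inverse. -/
def RD : C(DD, DD) := IsQuotientMap.lift (f := ⟨QQ, QQ_cont⟩) QQ_quot RQ RQ_factors

theorem RD_QQ (z : PP) : RD (QQ z) = RQ z := by
  have := IsQuotientMap.lift_comp (f := ⟨QQ, QQ_cont⟩) QQ_quot RQ RQ_factors
  exact congrArg (fun g : C(PP, DD) => g z) this

theorem KK_le_one {ε : ℝ} (h : ε ∈ KK) : ε ≤ 1 := by
  rcases h with rfl | ⟨n, rfl⟩
  · exact zero_le_one
  · exact pow_le_one₀ (by norm_num) (by norm_num)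

/-- `RD ∘ f` is homotopic to the identity. -/
theorem RD_f {f : DD → DD} (hs : IsShiftMap f) (p : DD) : RD (f p) = HD (1, p) := by
  obtain ⟨z, rfl⟩ := QQ_surj p
  rw [shift_QQ hs, RD_QQ, HD_QQ]
  apply Subtype.ext
  have h1 := KK_le_one z.2.2
  have hc : cut (z.1.2 / 2) = 1 := by unfold cut; apply min_eq_left; linarith
  have e : 2 * (z.1.2 / 2) = z.1.2 := by ring
  simp only [RQ, HQ, halfP, ContinuousMap.coe_mk, hc, e, one_mul]

theorem HD_zero (p : DD) : HD (0, p) = p := by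
  obtain ⟨z, rfl⟩ := QQ_surj p
  rw [HD_QQ]
  apply Subtype.ext
  obtain ⟨a, b⟩ := d_start z.1.1 z.1.2
  simp [HQ, QQ, a, b]

/-- The homotopy from the identity to `RD ∘ f`. -/
def homot (f : DD → DD) (hf : Continuous f) (hs : IsShiftMap f) :
    ContinuousMap.Homotopy (ContinuousMap.id DD) (RD.comp ⟨f, hf⟩) where
  toContinuousMap := HD
  map_zero_left := HD_zero
  map_one_left p := (RD_f hs p).symm

theorem f_inj {f : DD → DD} (hf : Continuous f) (hs : IsShiftMap f) {p : DD} (β : Path p p)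
    (h : (β.map hf).Homotopic (Path.refl (f p))) : β.Homotopic (Path.refl p) :=
  null_of_homotopy_id (homot f hf hs) β (h.map RD)

theorem KK_gap {ε : ℝ} (n : ℕ) (h : ε ∈ KK) (hne : ε ≠ sc n) : ε ≤ sc n / 2 ∨ 2 * sc n ≤ ε := by
  have hanti : Antitone sc := pow_right_anti₀ (by norm_num) (by norm_num)
  rcases h with rfl | ⟨m, rfl⟩
  · left; have := sc_pos n; linarith
  rcases lt_trichotomy m n with h | rfl | h
  · right
    have := hanti (Nat.succ_le_of_lt h)
    rw [Nat.succ_eq_add_one, sc_succ] at this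
    linarith
  · exact absurd rfl hne
  · left
    have := hanti (Nat.succ_le_of_lt h)
    rwa [Nat.succ_eq_add_one, sc_succ] at this

/-- bump function isolating the scale `sc n` -/
def chi (n : ℕ) (ε : ℝ) : ℝ := max 0 (1 - 2 / sc n * |ε - sc n|)

theorem chi_self (n : ℕ) : chi n (sc n) = 1 := by simp [chi]

theorem chi_zero {n : ℕ} {ε : ℝ} (h : ε ≤ sc n / 2 ∨ 2 * sc n ≤ ε) : chi n ε = 0 := by
  have hp := sc_pos n
  unfold chi
  apply max_eq_left
  have : sc n / 2 ≤ |ε - sc n| := by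
    rcases h with h | h
    · rw [abs_sub_comm]; exact le_trans (by linarith) (le_abs_self _)
    · exact le_trans (by linarith) (le_abs_self _)
  have h2 : 2 / sc n * (sc n / 2) = 1 := by field_simp
  have h3 : 2 / sc n * (sc n / 2) ≤ 2 / sc n * |ε - sc n| := by gcongr
  linarith

/-- the tent function on the level `n` arcs -/
def GG (n : ℕ) (x ε : ℝ) : ℝ := chi n ε * (Real.pi * (1 - Real.cos (2 * Real.pi * (x / sc n))))

theorem GG_cont (n : ℕ) : Continuous (fun z : ℝ × ℝ => GG n z.1 z.2) := by
  unfold GG chi; fun_prop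

theorem cos_fract (z : ℝ) : Real.cos (2 * Real.pi * z) = Real.cos (2 * Real.pi * Int.fract z) := by
  have : 2 * Real.pi * Int.fract z = 2 * Real.pi * z - ⌊z⌋ * (2 * Real.pi) := by
    rw [Int.fract]; ring
  rw [this, Real.cos_sub_int_mul_two_pi]

theorem GG_zero {n : ℕ} {x ε : ℝ} (hε : ε ∈ KK) (h : ht x ε = 0) : GG n x ε = 0 := by
  by_cases he : ε = sc n
  · subst he
    have := ht_eq_zero (sc_pos n) h
    unfold GG
    rw [cos_fract, this]; simp
  · unfold GG; rw [chi_zero (KK_gap n hε he), zero_mul]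

theorem GG_top {n : ℕ} {x : ℝ} (h : Int.fract (x / sc n) = 1 / 2) : GG n x (sc n) = 2 * Real.pi := by
  unfold GG
  rw [cos_fract, h, chi_self]
  have : 2 * Real.pi * (1 / 2) = Real.pi := by ring
  rw [this, Real.cos_pi]; ring

theorem fract_half {n : ℕ} {x : ℝ} (h : ht x (sc n / 2) = 0) :
    Int.fract (x / sc n) = 0 ∨ Int.fract (x / sc n) = 1 / 2 := by
  have hp := sc_pos n
  have h0 := ht_eq_zero (half_pos hp) h
  have e : x / (sc n / 2) = 2 * (x / sc n) := by field_simp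
  rw [e] at h0
  rcases fract_two_mul (x / sc n) with ⟨h1, h2⟩ | ⟨h1, h2⟩
  · left; linarith
  · right; linarith

theorem GG_exp {n : ℕ} {x ε : ℝ} (hε : ε ∈ KK) (h : ht x ε = 0) :
    Circle.exp (GG n x (2 * ε)) = 1 := by
  by_cases he : ε = sc (n + 1)
  · have e : 2 * ε = sc n := by rw [he, sc_succ]; ring
    rw [he, sc_succ] at h
    rw [e]
    rcases fract_half h with h1 | h1
    · rw [GG_zero (Or.inr ⟨n, rfl⟩) (ht_of_fract h1), Circle.exp_zero]
    · rw [GG_top h1, Circle.exp_two_pi]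
  · have := KK_gap (n + 1) hε he
    rw [sc_succ] at this
    have h2 : chi n (2 * ε) = 0 := by
      apply chi_zero
      rcases this with h | h
      · left; linarith
      · right; linarith
    unfold GG; rw [h2, zero_mul, Circle.exp_zero]

/-- real-valued function on the parameter space -/
def GQ (n : ℕ) : C(PP, ℝ) :=
  ⟨fun z => GG n z.1.1 z.1.2, (GG_cont n).comp continuous_subtype_val⟩

theorem GQ_factors (n : ℕ) : Function.FactorsThrough (GQ n) QQ := by
  rintro z w h
  rcases QQ_eq h with rfl | ⟨h1, h2, h3⟩
  · rfl
  · exact (GG_zero z.2.2 h2).trans (GG_zero w.2.2 h3).symm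

/-- real-valued function on `DD` -/
def GD (n : ℕ) : C(DD, ℝ) := IsQuotientMap.lift (f := ⟨QQ, QQ_cont⟩) QQ_quot (GQ n) (GQ_factors n)

theorem GD_QQ (n : ℕ) (z : PP) : GD n (QQ z) = GG n z.1.1 z.1.2 := by
  have := IsQuotientMap.lift_comp (f := ⟨QQ, QQ_cont⟩) QQ_quot (GQ n) (GQ_factors n)
  exact congrArg (fun g : C(PP, ℝ) => g z) this

/-- circle-valued function on the parameter space -/
def CQ (n : ℕ) : C(PP, Circle) :=
  ⟨fun z => Circle.exp (GG n z.1.1 (2 * z.1.2)), Circle.exp.continuous.comp ((GG_cont n).comp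
    (by fun_prop : Continuous fun z : PP => ((z : ℝ × ℝ).1, 2 * (z : ℝ × ℝ).2)))⟩

theorem CQ_factors (n : ℕ) : Function.FactorsThrough (CQ n) QQ := by
  rintro z w h
  rcases QQ_eq h with rfl | ⟨h1, h2, h3⟩
  · rfl
  · exact (GG_exp z.2.2 h2).trans (GG_exp w.2.2 h3).symm

/-- circle-valued function on `DD` -/
def CD (n : ℕ) : C(DD, Circle) :=
  IsQuotientMap.lift (f := ⟨QQ, QQ_cont⟩) QQ_quot (CQ n) (CQ_factors n)

theorem CD_QQ (n : ℕ) (z : PP) : CD n (QQ z) = Circle.exp (GG n z.1.1 (2 * z.1.2)) := by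
  have := IsQuotientMap.lift_comp (f := ⟨QQ, QQ_cont⟩) QQ_quot (CQ n) (CQ_factors n)
  exact congrArg (fun g : C(PP, Circle) => g z) this

theorem CD_f {f : DD → DD} (hs : IsShiftMap f) (n : ℕ) (p : DD) :
    CD n (f p) = Circle.exp (GD n p) := by
  obtain ⟨z, rfl⟩ := QQ_surj p
  rw [shift_QQ hs, CD_QQ, GD_QQ]
  have e : 2 * (z.1.2 / 2) = z.1.2 := by ring
  simp only [halfP, e]

theorem separate_aux {z w : PP} (h1 : z.1.1 = w.1.1) (h2 : ht z.1.1 z.1.2 ≠ 0)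
    (h3 : ht z.1.1 (z.1.2 / 2) = 0) (hne : z ≠ w) : ∃ n, GD n (QQ z) ≠ GD n (QQ w) := by
  obtain ⟨⟨x, ε⟩, hx, hε⟩ := z
  obtain ⟨⟨x', δ⟩, hx', hδ⟩ := w
  simp only at h1 h2 h3 hx hε hx' hδ
  subst h1
  rcases id hε with rfl | ⟨n, rfl⟩
  · exact absurd (ht_zero x) h2
  refine ⟨n, ?_⟩
  have hδn : δ ≠ sc n := by
    rintro rfl; exact hne rfl
  rw [GD_QQ, GD_QQ]
  simp only
  rcases fract_half h3 with h | h
  · exact absurd (ht_of_fract h) h2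
  · rw [GG_top h]
    unfold GG
    rw [chi_zero (KK_gap n hδ hδn), zero_mul]
    exact ne_of_gt Real.two_pi_pos

/-- If `f p = f q` but `p ≠ q`, some `GD n` separates `p` and `q`. -/
theorem separate {f : DD → DD} (hs : IsShiftMap f) {p q : DD} (h : f p = f q) (hne : p ≠ q) :
    ∃ n, GD n p ≠ GD n q := by
  obtain ⟨z, rfl⟩ := QQ_surj p
  obtain ⟨w, rfl⟩ := QQ_surj q
  have hzw : z ≠ w := fun h => hne (by rw [h])
  rw [shift_QQ hs, shift_QQ hs] at h
  rcases QQ_eq h with h1 | ⟨h1, h2, h3⟩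
  · refine absurd (Subtype.ext ?_) hzw
    have h2 := congrArg (fun a : PP => (a : ℝ × ℝ).1) h1
    have h3 := congrArg (fun a : PP => (a : ℝ × ℝ).2) h1
    simp only [halfP] at h2 h3
    exact Prod.ext h2 (by linarith)
  · simp only [halfP] at h1 h2 h3
    by_cases hz : ht z.1.1 z.1.2 = 0
    · by_cases hw : ht w.1.1 w.1.2 = 0
      · refine absurd (Subtype.ext ?_) hne
        exact Prod.ext h1 (hz.trans hw.symm)
      · obtain ⟨n, hn⟩ := separate_aux h1.symm hw h3 hzw.symm
        exact ⟨n, hn.symm⟩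
    · exact separate_aux h1 hz h2 hzw

/-- A path whose image under `f` is a null-homotopic loop is already a loop. -/
theorem f_closed {f : DD → DD} (hf : Continuous f) (hs : IsShiftMap f) {p q : DD} (β : Path p q)
    (h : f p = f q) (hn : ((β.map hf).cast rfl h).Homotopic (Path.refl (f p))) : p = q := by
  by_contra hne
  obtain ⟨n, hn'⟩ := separate hs h hne
  exact hn' (closed_lift ⟨f, hf⟩ (CD n) (GD n) (CD_f hs n) β h hn)

theorem statement7 (f : DD → DD) (hf : Continuous f) (hs : IsShiftMap f)
    (α : Path d0 d0) :
    IsReducedOn α.toContinuousMap ↔ IsReducedOn (α.map hf).toContinuousMap := by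
  constructor
  · rintro (⟨c, hc⟩ | h)
    · exact Or.inl ⟨f c, fun u => congrArg f (hc u)⟩
    · right
      intro s t hst he hn
      have he' : f (α s) = f (α t) := he
      have hcl : α s = α t := f_closed hf hs (subPath α.toContinuousMap s t hst.le) he' hn
      exact h s t hst hcl (f_inj hf hs ((subPath α.toContinuousMap s t hst.le).cast rfl hcl) hn)
  · rintro (⟨c, hc⟩ | h)
    · left
      have hc' : ∀ u, f (α u) = c := hc
      refine ⟨α 0, fun u => ?_⟩
      have he' : f (α 0) = f (α u) := (hc' 0).trans (hc' u).symm
      refine (f_closed hf hs (subPath α.toContinuousMap 0 u u.2.1) he' ?_).symm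
      have : ((subPath α.toContinuousMap 0 u u.2.1).map hf).cast rfl he' =
          Path.refl (f (α.toContinuousMap 0)) := by
        ext1
        funext v
        exact (hc' _).trans (hc' 0).symm
      rw [this]
    · right
      intro s t hst he hn
      refine h s t hst (congrArg f he) ?_
      exact hn.map ⟨f, hf⟩

end
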